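/- Let r ∈ ℕ. The integral ∫_{[0,∞)^r} a_r(t)·e^{−a_r(t)}/(1 − e^{−a_r(t)}) dt converges, and for s > 0 the Riemann-sum bounds ∫_{[s,∞)^r} a_r(t)e^{−a_r(t)}/(1−e^{−a_r(t)}) dt ≤ Σ_{k ∈ ℕ^r} a_r(s·k)e^{−a_r(s·k)}/(1−e^{−a_r(s·k)})·s^r ≤ ∫_{[0,∞)^r} a_r(t)e^{−a_r(t)}/(1−e^{−a_r(t)}) dt hold; moreover the difference between the sum and the full integral is O_r(s^{1/r}). -/

import Mathlib

open Finset MeasureTheory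

/-- `h_r(y) = ∏_{1 ≤ ℓ ≤ j ≤ r} (y_ℓ + ⋯ + y_j)`. -/
noncomputable def hpoly (r : ℕ) (y : Fin r → ℝ) : ℝ :=
  ∏ p ∈ Finset.univ.filter (fun p : Fin r × Fin r => p.1 ≤ p.2),
    ∑ i ∈ Finset.Icc p.1 p.2, y i

/-- `c_r = r!(r-1)!⋯1!`. -/
def crconst (r : ℕ) : ℕ := ∏ i ∈ Finset.range r, Nat.factorial (i + 1)

/-- The Weyl dimension polynomial `a_r(k) = h_r(k)/c_r`. -/
noncomputable def apoly (r : ℕ) (y : Fin r → ℝ) : ℝ := hpoly r y / crconst r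

/-- `F(u) = u e^{-u}/(1 - e^{-u})`. -/
noncomputable def Ffun (u : ℝ) : ℝ := u * Real.exp (-u) / (1 - Real.exp (-u))

/-- The Riemann-sum term `F(a_r(s·k)) s^r` for `k ∈ ℕ^r`. -/
noncomputable def sumTerm (r : ℕ) (s : ℝ) (k : {k : Fin r → ℕ // ∀ i, 0 < k i}) : ℝ :=
  Ffun (apoly r (fun i => s * (k.1 i : ℝ))) * s ^ r

/-!
On a cube of side `s` with largest corner `s k` a decreasing function is at least its value at
`s k`, and on the cube with smallest corner `s k` at most that value. Since these cubes tile
`(0, ∞)^r` and `(s, ∞)^r`, the lattice sum lies between the two integrals, so everything reduces to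
the integral of `F ∘ a_r` over the slabs `{0 < t_i ≤ s}`.

Fix `t_i = x` in `h_{n+1}`. Shrinking each factor with endpoints `i` and `j ≠ i` to its term `t_j`,
and removing `x` from the factors in which `i` is not an endpoint, bounds `h_{n+1}` below by
`x (∏ t_j) h_n`, with `h_n` taken in the remaining variables. By homogeneity the integral over
those variables is a constant times a power `x ^ (-β)` with `β < 1`, hence integrable at `0`.
Iterating the argument produces the family `(∏ t_j)^m h_n`, along which finiteness follows by
induction on `n`.
-/

open scoped ENNReal

section PlanckProfile

lemma Ffun_eq_inv_slope (u : ℝ) : Ffun u = ((Real.exp u - Real.exp 0) / (u - 0))⁻¹ := by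
  have hexp : Real.exp u * Real.exp (-u) = 1 := by
    rw [← Real.exp_add, add_neg_cancel, Real.exp_zero]
  rw [inv_div, Real.exp_zero, sub_zero, Ffun,
    ← mul_div_mul_left (u * Real.exp (-u)) _ (Real.exp_ne_zero u),
    mul_left_comm, mul_sub, hexp, mul_one, mul_one]

lemma Ffun_nonneg (u : ℝ) : 0 ≤ Ffun u := by
  rw [Ffun_eq_inv_slope]
  refine inv_nonneg.2 (div_nonneg_iff.2 ?_)
  simpa [and_comm] using le_total 0 u

lemma antitoneOn_Ffun : AntitoneOn Ffun (Set.Ioi 0) := by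
  intro u (hu : 0 < u) v (hv : 0 < v) huv
  rw [Ffun_eq_inv_slope, Ffun_eq_inv_slope]
  refine inv_anti₀ (div_pos (by simpa using hu) (by simpa using hu)) ?_
  exact convexOn_exp.secant_mono (Set.mem_univ 0) (Set.mem_univ u) (Set.mem_univ v) hu.ne' hv.ne'
    huv

lemma measurable_Ffun : Measurable Ffun := by
  unfold Ffun
  fun_prop

lemma Ffun_le_one {u : ℝ} (hu : 0 < u) : Ffun u ≤ 1 := by
  have hexp : u + 1 ≤ Real.exp u := Real.add_one_le_exp u
  rw [Ffun_eq_inv_slope, Real.exp_zero, sub_zero, inv_div, div_le_one (by linarith)]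
  linarith

lemma Ffun_le_six_div_sq {u : ℝ} (hu : 0 < u) : Ffun u ≤ 6 / u ^ 2 := by
  have hexp : 1 + u + u ^ 2 / 2 + u ^ 3 / 6 ≤ Real.exp u := by
    simpa [Finset.sum_range_succ, Nat.factorial] using Real.sum_le_exp_of_nonneg hu.le 4
  have hpos : 0 < Real.exp u - 1 := by linarith [pow_pos hu 2, pow_pos hu 3]
  rw [Ffun_eq_inv_slope, Real.exp_zero, sub_zero, inv_div, div_le_div_iff₀ hpos (by positivity)]
  linarith [pow_pos hu 2]

end PlanckProfile

section Orthant

/-- The open orthant `(c, ∞)^ι`. -/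
def openOrthant {ι : Type*} (c : ℝ) : Set (ι → ℝ) := {t | ∀ i, c < t i}

/-- The part of the positive orthant within distance `s` of its `i`-th face. -/
def orthantSlab {ι : Type*} (i : ι) (s : ℝ) : Set (ι → ℝ) := {t | t ∈ openOrthant 0 ∧ t i ≤ s}

variable {ι : Type*}

lemma openOrthant_eq_pi (c : ℝ) :
    (openOrthant c : Set (ι → ℝ)) = Set.univ.pi fun _ ↦ Set.Ioi c := by
  ext t
  simp [openOrthant]

lemma openOrthant_anti : Antitone (openOrthant : ℝ → Set (ι → ℝ)) :=
  fun _ _ h _ ht i ↦ h.trans_lt (ht i)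

lemma preimage_smul_openOrthant_zero {R : ℝ} (hR : 0 < R) :
    (fun t : ι → ℝ ↦ R • t) ⁻¹' openOrthant 0 = openOrthant 0 := by
  ext t
  simp [openOrthant, hR]

lemma openOrthant_zero_sdiff_subset_iUnion (s : ℝ) :
    openOrthant 0 \ openOrthant s ⊆ ⋃ i : ι, orthantSlab i s := by
  rintro t ⟨ht, hts⟩
  obtain ⟨i, hi⟩ := not_forall.1 hts
  exact Set.mem_iUnion.2 ⟨i, ht, not_lt.1 hi⟩

lemma measurableSet_openOrthant [Countable ι] (c : ℝ) :
    MeasurableSet (openOrthant c : Set (ι → ℝ)) := by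
  rw [openOrthant_eq_pi]
  exact MeasurableSet.univ_pi fun _ ↦ measurableSet_Ioi

lemma measurableSet_orthantSlab [Countable ι] (i : ι) (s : ℝ) :
    MeasurableSet (orthantSlab i s : Set (ι → ℝ)) :=
  (measurableSet_openOrthant 0).inter (measurableSet_le (measurable_pi_apply i) measurable_const)

lemma setOf_forall_le_ae_eq_openOrthant [Fintype ι] (c : ℝ) :
    {t : ι → ℝ | ∀ i, c ≤ t i} =ᵐ[volume] (openOrthant c : Set (ι → ℝ)) := by
  rw [openOrthant_eq_pi]
  exact (Measure.univ_pi_Ioi_ae_eq_Ici (f := fun _ : ι ↦ c)).symm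

end Orthant

section LatticeSum

variable {ι : Type*} {s : ℝ}

/-- The half-open cube of side `s` whose largest corner is `s • k`, translated by `(c, …, c)`. For
`k` ranging over the positive lattice points these cubes tile `openOrthant c`. -/
def gridCell (c s : ℝ) (k : ι → ℕ) : Set (ι → ℝ) :=
  Set.univ.pi fun i ↦ Set.Ioc (c + s * (k i - 1)) (c + s * k i)

lemma mem_gridCell_iff (hs : 0 < s) {c : ℝ} {k : ι → ℕ} (hk : ∀ i, 0 < k i) {t : ι → ℝ} :
    t ∈ gridCell c s k ↔ ∀ i, ⌈(t i - c) / s⌉₊ = k i := by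
  rw [gridCell, Set.mem_univ_pi]
  refine forall_congr' fun i ↦ ?_
  rw [Nat.ceil_eq_iff (hk i).ne', lt_div_iff₀ hs, div_le_iff₀ hs, Nat.cast_pred (hk i),
    lt_sub_iff_add_lt', sub_le_iff_le_add', mul_comm s, mul_comm s, Set.mem_Ioc]

lemma iUnion_gridCell (hs : 0 < s) (c : ℝ) :
    ⋃ k : {k : ι → ℕ // ∀ i, 0 < k i}, gridCell c s k.1 = openOrthant c := by
  ext t
  rw [Set.mem_iUnion]
  constructor
  · rintro ⟨k, ht⟩ i
    have hceil : 0 < ⌈(t i - c) / s⌉₊ := ((mem_gridCell_iff hs k.2).1 ht i) ▸ k.2 i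
    rwa [Nat.ceil_pos, div_pos_iff_of_pos_right hs, sub_pos] at hceil
  · intro ht
    have hceil (i : ι) : 0 < ⌈(t i - c) / s⌉₊ := Nat.ceil_pos.2 (div_pos (sub_pos.2 (ht i)) hs)
    exact ⟨⟨_, hceil⟩, (mem_gridCell_iff hs hceil).2 fun _ ↦ rfl⟩

lemma pairwise_disjoint_gridCell (hs : 0 < s) (c : ℝ) :
    Pairwise (Function.onFun Disjoint
      fun k : {k : ι → ℕ // ∀ i, 0 < k i} ↦ gridCell c s k.1) := by
  intro k l hkl
  refine Set.disjoint_left.2 fun t htk htl ↦ hkl (Subtype.ext (funext fun i ↦ ?_))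
  rw [← (mem_gridCell_iff hs k.2).1 htk i, (mem_gridCell_iff hs l.2).1 htl i]

lemma gridCell_subset_openOrthant (hs : 0 < s) (c : ℝ) (k : {k : ι → ℕ // ∀ i, 0 < k i}) :
    gridCell c s k.1 ⊆ openOrthant c :=
  (Set.subset_iUnion (fun k : {k : ι → ℕ // ∀ i, 0 < k i} ↦ gridCell c s k.1) k).trans_eq
    (iUnion_gridCell hs c)

lemma smul_mem_openOrthant_zero (hs : 0 < s) (k : {k : ι → ℕ // ∀ i, 0 < k i}) :
    (fun i ↦ s * (k.1 i : ℝ)) ∈ (openOrthant 0 : Set (ι → ℝ)) :=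
  fun i ↦ mul_pos hs (Nat.cast_pos.2 (k.2 i))

lemma measurableSet_gridCell [Countable ι] (c s : ℝ) (k : ι → ℕ) :
    MeasurableSet (gridCell c s k) :=
  MeasurableSet.univ_pi fun _ ↦ measurableSet_Ioc

variable [Fintype ι]

lemma volume_gridCell (hs : 0 < s) (c : ℝ) (k : ι → ℕ) :
    volume (gridCell c s k) = ENNReal.ofReal (s ^ Fintype.card ι) := by
  have hside (i : ι) : c + s * k i - (c + s * (k i - 1)) = s := by ring
  simp only [gridCell, Real.volume_pi_Ioc, hside, Finset.prod_const, Finset.card_univ,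
    ENNReal.ofReal_pow hs.le]

lemma volume_real_gridCell (hs : 0 < s) (c : ℝ) (k : ι → ℕ) :
    volume.real (gridCell c s k) = s ^ Fintype.card ι := by
  rw [Measure.real, volume_gridCell hs, ENNReal.toReal_ofReal (by positivity)]

lemma hasSum_setIntegral_gridCell {f : (ι → ℝ) → ℝ} {c : ℝ} (hs : 0 < s)
    (hf : IntegrableOn f (openOrthant c)) :
    HasSum (fun k : {k : ι → ℕ // ∀ i, 0 < k i} ↦ ∫ t in gridCell c s k.1, f t)
      (∫ t in openOrthant c, f t) := by
  rw [← iUnion_gridCell hs] at hf ⊢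
  exact hasSum_integral_iUnion (fun k ↦ measurableSet_gridCell c s k.1)
    (pairwise_disjoint_gridCell hs c) hf

variable {f : (ι → ℝ) → ℝ}

lemma latticeTerm_le_setIntegral_gridCell (hanti : AntitoneOn f (openOrthant 0))
    (hfi : IntegrableOn f (openOrthant 0)) (hs : 0 < s) (k : {k : ι → ℕ // ∀ i, 0 < k i}) :
    f (fun i ↦ s * (k.1 i : ℝ)) * s ^ Fintype.card ι ≤ ∫ t in gridCell 0 s k.1, f t := by
  have hsub := gridCell_subset_openOrthant hs 0 k
  rw [← volume_real_gridCell hs 0 k.1]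
  refine setIntegral_ge_of_const_le_real (measurableSet_gridCell _ _ _)
    (by rw [volume_gridCell hs]; exact ENNReal.ofReal_ne_top) (fun t ht ↦ ?_) (hfi.mono_set hsub)
  refine hanti (hsub ht) (smul_mem_openOrthant_zero hs k) fun i ↦ ?_
  simpa using (ht i (Set.mem_univ i)).2

lemma setIntegral_gridCell_le_latticeTerm (hanti : AntitoneOn f (openOrthant 0))
    (hfi : IntegrableOn f (openOrthant 0)) (hs : 0 < s) (k : {k : ι → ℕ // ∀ i, 0 < k i}) :
    ∫ t in gridCell s s k.1, f t ≤ f (fun i ↦ s * (k.1 i : ℝ)) * s ^ Fintype.card ι := by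
  have hsub := (gridCell_subset_openOrthant hs s k).trans (openOrthant_anti hs.le)
  have hfin : volume (gridCell s s k.1) ≠ ⊤ := by
    rw [volume_gridCell hs]; exact ENNReal.ofReal_ne_top
  rw [← volume_real_gridCell hs s k.1, mul_comm, ← smul_eq_mul, ← setIntegral_const]
  refine setIntegral_mono_on (hfi.mono_set hsub) (integrableOn_const hfin)
    (measurableSet_gridCell _ _ _) fun t ht ↦ ?_
  refine hanti (smul_mem_openOrthant_zero hs k) (hsub ht) fun i ↦ ?_
  linarith [(ht i (Set.mem_univ i)).1]

lemma summable_latticeTerm (hanti : AntitoneOn f (openOrthant 0))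
    (hpos : ∀ t ∈ openOrthant 0, 0 ≤ f t) (hfi : IntegrableOn f (openOrthant 0)) (hs : 0 < s) :
    Summable fun k : {k : ι → ℕ // ∀ i, 0 < k i} ↦
      f (fun i ↦ s * (k.1 i : ℝ)) * s ^ Fintype.card ι :=
  (hasSum_setIntegral_gridCell hs hfi).summable.of_nonneg_of_le
    (fun k ↦ mul_nonneg (hpos _ (smul_mem_openOrthant_zero hs k)) (by positivity))
    (latticeTerm_le_setIntegral_gridCell hanti hfi hs)

lemma tsum_latticeTerm_le_setIntegral (hanti : AntitoneOn f (openOrthant 0))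
    (hpos : ∀ t ∈ openOrthant 0, 0 ≤ f t) (hfi : IntegrableOn f (openOrthant 0)) (hs : 0 < s) :
    ∑' k : {k : ι → ℕ // ∀ i, 0 < k i}, f (fun i ↦ s * (k.1 i : ℝ)) * s ^ Fintype.card ι ≤
      ∫ t in openOrthant 0, f t :=
  hasSum_le (latticeTerm_le_setIntegral_gridCell hanti hfi hs)
    (summable_latticeTerm hanti hpos hfi hs).hasSum (hasSum_setIntegral_gridCell hs hfi)

lemma setIntegral_le_tsum_latticeTerm (hanti : AntitoneOn f (openOrthant 0))
    (hpos : ∀ t ∈ openOrthant 0, 0 ≤ f t) (hfi : IntegrableOn f (openOrthant 0)) (hs : 0 < s) :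
    ∫ t in openOrthant s, f t ≤
      ∑' k : {k : ι → ℕ // ∀ i, 0 < k i}, f (fun i ↦ s * (k.1 i : ℝ)) * s ^ Fintype.card ι :=
  hasSum_le (setIntegral_gridCell_le_latticeTerm hanti hfi hs)
    (hasSum_setIntegral_gridCell hs (hfi.mono_set (openOrthant_anti hs.le)))
    (summable_latticeTerm hanti hpos hfi hs).hasSum

end LatticeSum

section WeylPolynomial

variable {n r : ℕ}

/-- The factor `y_l + ⋯ + y_j` of `hpoly`, extended by `1` to pairs with `j < l` so that `hpoly`
becomes a product over the full square of indices. -/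
noncomputable def weylFactor (y : Fin r → ℝ) (l j : Fin r) : ℝ :=
  if l ≤ j then ∑ k ∈ Finset.Icc l j, y k else 1

lemma hpoly_eq_prod_weylFactor (y : Fin r → ℝ) : hpoly r y = ∏ l, ∏ j, weylFactor y l j := by
  simp only [hpoly, weylFactor, Finset.prod_filter, Fintype.prod_prod_type]

lemma weylFactor_self (y : Fin r → ℝ) (i : Fin r) : weylFactor y i i = y i := by
  simp [weylFactor]

lemma weylFactor_nonneg {y : Fin r → ℝ} (hy : y ∈ openOrthant 0) (l j : Fin r) :
    0 ≤ weylFactor y l j := by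
  unfold weylFactor
  split_ifs
  exacts [Finset.sum_nonneg fun k _ ↦ (hy k).le, zero_le_one]

lemma le_weylFactor_mul_weylFactor {y : Fin r → ℝ} (hy : y ∈ openOrthant 0) {i j : Fin r}
    (hij : j ≠ i) : y j ≤ weylFactor y i j * weylFactor y j i := by
  have hmem {s : Finset (Fin r)} (hs : j ∈ s) : y j ≤ ∑ k ∈ s, y k :=
    Finset.single_le_sum (fun k _ ↦ (hy k).le) hs
  rcases hij.lt_or_gt with hlt | hgt
  · simpa [weylFactor, hlt.le, hlt.not_ge] using hmem (Finset.left_mem_Icc.2 hlt.le)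
  · simpa [weylFactor, hgt.le, hgt.not_ge] using hmem (Finset.right_mem_Icc.2 hgt.le)

lemma weylFactor_comp_succAbove_le (i : Fin (n + 1)) {t : Fin (n + 1) → ℝ}
    (ht : t ∈ openOrthant 0) (l j : Fin n) :
    weylFactor (fun k ↦ t (i.succAbove k)) l j ≤
      weylFactor t (i.succAbove l) (i.succAbove j) := by
  simp only [weylFactor, Fin.succAbove_le_succAbove_iff]
  split_ifs
  · calc ∑ k ∈ Finset.Icc l j, t (i.succAbove k)
        = ∑ k ∈ (Finset.Icc l j).map i.succAboveEmb, t k :=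
          (Finset.sum_map _ i.succAboveEmb t).symm
      _ ≤ ∑ k ∈ Finset.Icc (i.succAbove l) (i.succAbove j), t k := by
          have hsub : (Finset.Icc l j).map i.succAboveEmb ⊆
              Finset.Icc (i.succAbove l) (i.succAbove j) := by
            intro _ hmap
            obtain ⟨k, hmem, rfl⟩ := Finset.mem_map.1 hmap
            simpa using hmem
          exact Finset.sum_le_sum_of_subset_of_nonneg hsub fun k _ _ ↦ (ht k).le
  · exact le_rfl

lemma hpoly_pos {y : Fin r → ℝ} (hy : y ∈ openOrthant 0) : 0 < hpoly r y :=
  Finset.prod_pos fun _ hp ↦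
    Finset.sum_pos (fun i _ ↦ hy i) (Finset.nonempty_Icc.2 (Finset.mem_filter.1 hp).2)

lemma monotoneOn_hpoly : MonotoneOn (hpoly r) (openOrthant 0) := by
  intro y hy z _ hyz
  exact Finset.prod_le_prod (fun p _ ↦ Finset.sum_nonneg fun i _ ↦ (hy i).le)
    fun p _ ↦ Finset.sum_le_sum fun i _ ↦ hyz i

lemma card_filter_fst_le_snd (n : ℕ) :
    #{p : Fin n × Fin n | p.1 ≤ p.2} = (n + 1).choose 2 := by
  have hcolumn (j : Fin n) : #{l | l ≤ j} = (j : ℕ) + 1 := by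
    rw [Finset.filter_ge_eq_Iic, Fin.card_Iic]
  calc #{p : Fin n × Fin n | p.1 ≤ p.2} = ∑ j : Fin n, #{l | l ≤ j} := by
        simp only [Finset.card_filter, Fintype.sum_prod_type_right]
    _ = ∑ j ∈ Finset.range n, (j + 1) := by
        simp only [hcolumn, Fin.sum_univ_eq_sum_range (· + 1)]
    _ = (n + 1).choose 2 := by
        rw [Nat.choose_two_right, ← Finset.sum_range_id, Finset.sum_range_succ', add_zero]

lemma hpoly_smul (R : ℝ) (y : Fin r → ℝ) :
    hpoly r (R • y) = R ^ (r + 1).choose 2 * hpoly r y := by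
  simp only [hpoly, Pi.smul_apply, smul_eq_mul, ← Finset.mul_sum, Finset.prod_mul_distrib,
    Finset.prod_const, card_filter_fst_le_snd]

lemma mul_prod_mul_hpoly_le_hpoly (i : Fin (n + 1)) {t : Fin (n + 1) → ℝ}
    (ht : t ∈ openOrthant 0) :
    t i * (∏ j, t (i.succAbove j)) * hpoly n (fun j ↦ t (i.succAbove j)) ≤ hpoly (n + 1) t := by
  set y : Fin n → ℝ := fun j ↦ t (i.succAbove j)
  have hy : y ∈ openOrthant 0 := fun j ↦ ht _
  have hcross : ∏ j, y j ≤
      ∏ j, weylFactor t i (i.succAbove j) * weylFactor t (i.succAbove j) i :=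
    Finset.prod_le_prod (fun j _ ↦ (hy j).le) fun j _ ↦
      le_weylFactor_mul_weylFactor ht (i.succAbove_ne j)
  have hrest : hpoly n y ≤ ∏ l, ∏ j, weylFactor t (i.succAbove l) (i.succAbove j) := by
    rw [hpoly_eq_prod_weylFactor]
    exact Finset.prod_le_prod (fun l _ ↦ Finset.prod_nonneg fun j _ ↦ weylFactor_nonneg hy l j)
      fun l _ ↦ Finset.prod_le_prod (fun j _ ↦ weylFactor_nonneg hy l j) fun j _ ↦
        weylFactor_comp_succAbove_le i ht l j
  have hprod_nonneg : 0 ≤ ∏ j, y j := Finset.prod_nonneg fun j _ ↦ (hy j).le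
  calc t i * (∏ j, y j) * hpoly n y
      ≤ t i * (∏ j, weylFactor t i (i.succAbove j) * weylFactor t (i.succAbove j) i) *
          ∏ l, ∏ j, weylFactor t (i.succAbove l) (i.succAbove j) :=
        mul_le_mul (mul_le_mul_of_nonneg_left hcross (ht i).le) hrest (hpoly_pos hy).le
          (mul_nonneg (ht i).le (hprod_nonneg.trans hcross))
    _ = hpoly (n + 1) t := by
        rw [hpoly_eq_prod_weylFactor, Fin.prod_univ_succAbove _ i]
        simp only [Fin.prod_univ_succAbove _ i, Finset.prod_mul_distrib, weylFactor_self]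
        ring

lemma one_le_hpoly {y : Fin r → ℝ} (hy : y ∈ openOrthant 1) : 1 ≤ hpoly r y := by
  rw [hpoly, ← Finset.prod_const_one (s := Finset.univ.filter fun p : Fin r × Fin r ↦ p.1 ≤ p.2)]
  refine Finset.prod_le_prod (fun _ _ ↦ zero_le_one) fun p hp ↦ (hy p.1).le.trans ?_
  exact Finset.single_le_sum (f := y) (fun k _ ↦ (zero_lt_one.trans (hy k)).le)
    (Finset.left_mem_Icc.2 (Finset.mem_filter.1 hp).2)

lemma prod_le_hpoly {t : Fin r → ℝ} (ht : t ∈ openOrthant 1) : ∏ i, t i ≤ hpoly r t := by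
  have ht₀ : t ∈ openOrthant 0 := openOrthant_anti zero_le_one ht
  cases r with
  | zero => simp [hpoly]
  | succ n =>
    calc ∏ i, t i = t 0 * ∏ j : Fin n, t (Fin.succAbove 0 j) := Fin.prod_univ_succAbove t 0
      _ ≤ t 0 * (∏ j : Fin n, t (Fin.succAbove 0 j)) * hpoly n fun j ↦ t (Fin.succAbove 0 j) :=
        le_mul_of_one_le_right
          (mul_nonneg (ht₀ 0).le (Finset.prod_nonneg fun j _ ↦ (ht₀ _).le))
          (one_le_hpoly fun j ↦ ht _)
      _ ≤ hpoly (n + 1) t := mul_prod_mul_hpoly_le_hpoly 0 ht₀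

lemma crconst_pos (r : ℕ) : (0 : ℝ) < crconst r :=
  Nat.cast_pos.2 (Finset.prod_pos fun _ _ ↦ Nat.factorial_pos _)

lemma apoly_pos {y : Fin r → ℝ} (hy : y ∈ openOrthant 0) : 0 < apoly r y :=
  div_pos (hpoly_pos hy) (crconst_pos r)

lemma monotoneOn_apoly : MonotoneOn (apoly r) (openOrthant 0) := fun _ hy _ hz hyz ↦
  div_le_div_of_nonneg_right (monotoneOn_hpoly hy hz hyz) (crconst_pos r).le

lemma continuous_apoly (r : ℕ) : Continuous (apoly r) := by
  unfold apoly hpoly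
  fun_prop

lemma antitoneOn_Ffun_apoly : AntitoneOn (fun t ↦ Ffun (apoly r t)) (openOrthant 0) :=
  fun _ hy _ hz hyz ↦ antitoneOn_Ffun (apoly_pos hy) (apoly_pos hz) (monotoneOn_apoly hy hz hyz)

/-- The homogeneous polynomial `(y_1 ⋯ y_n)^m h_n(y)`. This family, unlike `h_n` alone, is
stable under fixing one coordinate `x`, which leads from `m, n + 1` to `x^(m+1)` times the member
`m + 1, n`. -/
noncomputable def twistedHpoly (m n : ℕ) (y : Fin n → ℝ) : ℝ := (∏ j, y j) ^ m * hpoly n y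

/-- The degree of `twistedHpoly m n`. -/
def twistedDegree (m n : ℕ) : ℕ := n * m + (n + 1).choose 2

variable {m : ℕ}

lemma twistedHpoly_zero_left (y : Fin n → ℝ) : twistedHpoly 0 n y = hpoly n y := by
  rw [twistedHpoly, pow_zero, one_mul]

lemma twistedHpoly_pos {y : Fin n → ℝ} (hy : y ∈ openOrthant 0) : 0 < twistedHpoly m n y :=
  mul_pos (pow_pos (Finset.prod_pos fun j _ ↦ hy j) m) (hpoly_pos hy)

lemma twistedHpoly_smul (R : ℝ) (y : Fin n → ℝ) :
    twistedHpoly m n (R • y) = R ^ twistedDegree m n * twistedHpoly m n y := by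
  simp only [twistedHpoly, twistedDegree, hpoly_smul, Pi.smul_apply, smul_eq_mul,
    Finset.prod_mul_distrib, Finset.prod_const, Finset.card_univ, Fintype.card_fin]
  ring

lemma prod_le_twistedHpoly {y : Fin n → ℝ} (hy : y ∈ openOrthant 1) :
    ∏ j, y j ≤ twistedHpoly m n y := by
  have hprod : 1 ≤ ∏ j, y j := by
    rw [← Finset.prod_const_one (s := (Finset.univ : Finset (Fin n)))]
    exact Finset.prod_le_prod (fun _ _ ↦ zero_le_one) fun j _ ↦ (hy j).le
  calc ∏ j, y j ≤ hpoly n y := prod_le_hpoly hy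
    _ ≤ twistedHpoly m n y :=
      le_mul_of_one_le_left (zero_le_one.trans (one_le_hpoly hy)) (one_le_pow₀ hprod)

lemma pow_mul_twistedHpoly_le (i : Fin (n + 1)) {t : Fin (n + 1) → ℝ} (ht : t ∈ openOrthant 0) :
    t i ^ (m + 1) * twistedHpoly (m + 1) n (fun j ↦ t (i.succAbove j)) ≤
      twistedHpoly m (n + 1) t := by
  set y : Fin n → ℝ := fun j ↦ t (i.succAbove j)
  calc t i ^ (m + 1) * twistedHpoly (m + 1) n y
      = (t i * ∏ j, y j) ^ m * (t i * (∏ j, y j) * hpoly n y) := by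
        rw [twistedHpoly]
        ring
    _ ≤ (t i * ∏ j, y j) ^ m * hpoly (n + 1) t := by
        have hnonneg : 0 ≤ t i * ∏ j, y j :=
          mul_nonneg (ht i).le (Finset.prod_nonneg fun j _ ↦ (ht _).le)
        gcongr
        exact mul_prod_mul_hpoly_le_hpoly i ht
    _ = twistedHpoly m (n + 1) t := by rw [twistedHpoly, Fin.prod_univ_succAbove t i]

end WeylPolynomial

section Integration

open Module

lemma setLIntegral_Ioc_rpow {a s : ℝ} (ha : -1 < a) (hs : 0 < s) :
    ∫⁻ x in Set.Ioc 0 s, ENNReal.ofReal (x ^ a) = ENNReal.ofReal (s ^ (a + 1) / (a + 1)) := by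
  have hfi : IntegrableOn (fun x : ℝ ↦ x ^ a) (Set.Ioc 0 s) :=
    (intervalIntegrable_iff_integrableOn_Ioc_of_le hs.le).1
      (intervalIntegral.intervalIntegrable_rpow' ha)
  have hnonneg : ∀ᵐ x ∂volume.restrict (Set.Ioc 0 s), 0 ≤ x ^ a :=
    ae_restrict_of_forall_mem measurableSet_Ioc fun x hx ↦ Real.rpow_nonneg hx.1.le a
  rw [← ofReal_integral_eq_lintegral_ofReal hfi hnonneg,
    ← intervalIntegral.integral_of_le hs.le, integral_rpow (Or.inl ha),
    Real.zero_rpow (by linarith), sub_zero]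

lemma setIntegral_sub_setIntegral_eq_toReal {α : Type*} [MeasurableSpace α] {μ : Measure α}
    {f : α → ℝ} {S T : Set α} (hfi : IntegrableOn f S μ) (hf : ∀ x, 0 ≤ f x)
    (hT : MeasurableSet T) (hTS : T ⊆ S) :
    (∫ x in S, f x ∂μ) - ∫ x in T, f x ∂μ = (∫⁻ x in S \ T, ENNReal.ofReal (f x) ∂μ).toReal := by
  rw [← setIntegral_sdiff hT hfi hTS]
  exact integral_eq_lintegral_of_nonneg_ae (ae_of_all _ hf)
    (hfi.mono_set Set.sdiff_subset).aestronglyMeasurable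

variable {E : Type*} [NormedAddCommGroup E] [NormedSpace ℝ E] [MeasurableSpace E] [BorelSpace E]
  [FiniteDimensional ℝ E] (μ : Measure E) [μ.IsAddHaarMeasure]

lemma setLIntegral_comp_smul_of_pos (f : E → ℝ≥0∞) {R : ℝ} (hR : 0 < R) (S : Set E) :
    ∫⁻ x in (R • ·) ⁻¹' S, f (R • x) ∂μ =
      ENNReal.ofReal (R ^ finrank ℝ E)⁻¹ * ∫⁻ x in S, f x ∂μ := by
  have hemb : MeasurableEmbedding (R • · : E → E) :=
    (Homeomorph.smulOfNeZero R hR.ne').measurableEmbedding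
  calc ∫⁻ x in (R • ·) ⁻¹' S, f (R • x) ∂μ
      = ∫⁻ x in S, f x ∂(μ.map (R • ·)) := by rw [hemb.restrict_map, hemb.lintegral_map]
    _ = ENNReal.ofReal (R ^ finrank ℝ E)⁻¹ * ∫⁻ x in S, f x ∂μ := by
        rw [Measure.map_addHaar_smul μ hR.ne', abs_of_pos (by positivity),
          Measure.restrict_smul, lintegral_smul_measure, smul_eq_mul]

lemma setLIntegral_comp_mul_of_homogeneous {S : Set E}
    (hS : ∀ R : ℝ, 0 < R → (R • ·) ⁻¹' S = S) {Q : E → ℝ} {d : ℕ} (hd : d ≠ 0)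
    (hQ : ∀ (R : ℝ) (x : E), Q (R • x) = R ^ d * Q x) (F : ℝ → ℝ≥0∞) {a : ℝ} (ha : 0 < a) :
    ∫⁻ x in S, F (a * Q x) ∂μ =
      ENNReal.ofReal (a ^ (-(finrank ℝ E / d : ℝ))) * ∫⁻ x in S, F (Q x) ∂μ := by
  set R : ℝ := a ^ (d⁻¹ : ℝ) with hR
  have hR₀ : 0 < R := Real.rpow_pos_of_pos ha _
  have hRd : R ^ d = a := Real.rpow_inv_natCast_pow ha.le hd
  have hjac : (R ^ finrank ℝ E)⁻¹ = a ^ (-(finrank ℝ E / d : ℝ)) := by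
    rw [hR, ← Real.rpow_mul_natCast ha.le, Real.rpow_neg ha.le, inv_mul_eq_div]
  calc ∫⁻ x in S, F (a * Q x) ∂μ = ∫⁻ x in (R • ·) ⁻¹' S, F (Q (R • x)) ∂μ := by
        simp only [hS R hR₀, hQ, hRd]
    _ = ENNReal.ofReal (a ^ (-(finrank ℝ E / d : ℝ))) * ∫⁻ x in S, F (Q x) ∂μ := by
        rw [setLIntegral_comp_smul_of_pos μ (fun x ↦ F (Q x)) hR₀ S, hjac]

lemma setLIntegral_orthantSlab_le_lintegral_lintegral {n : ℕ} (i : Fin (n + 1)) (s : ℝ)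
    (f : ℝ → (Fin n → ℝ) → ℝ≥0∞) :
    ∫⁻ t in orthantSlab i s, f (t i) (fun j ↦ t (i.succAbove j)) ≤
      ∫⁻ x in Set.Ioc 0 s, ∫⁻ y in openOrthant 0, f x y := by
  have hpre : (orthantSlab i s : Set (Fin (n + 1) → ℝ)) =
      MeasurableEquiv.piFinSuccAbove (fun _ ↦ ℝ) i ⁻¹' (Set.Ioc 0 s ×ˢ openOrthant 0) := by
    ext t
    simp only [orthantSlab, openOrthant, Set.mem_ofPred_eq, Fin.forall_iff_succAbove i,
      Set.mem_preimage, Set.mem_prod, Set.mem_Ioc]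
    exact and_right_comm
  calc ∫⁻ t in orthantSlab i s, f (t i) (fun j ↦ t (i.succAbove j))
      = ∫⁻ p in Set.Ioc 0 s ×ˢ openOrthant 0, f p.1 p.2 := by
        rw [hpre]
        exact (volume_preserving_piFinSuccAbove (fun _ ↦ ℝ) i).setLIntegral_comp_preimage_emb
          (MeasurableEquiv.measurableEmbedding _) (fun p ↦ f p.1 p.2) _
    _ ≤ ∫⁻ x in Set.Ioc 0 s, ∫⁻ y in openOrthant 0, f x y := by
        rw [Measure.volume_eq_prod, ← Measure.prod_restrict]
        exact lintegral_prod_le _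

lemma integrableOn_prod_inv_sq (n : ℕ) :
    IntegrableOn (fun t : Fin n → ℝ ↦ ∏ j, (t j ^ 2)⁻¹) (openOrthant 1) := by
  have hone : IntegrableOn (fun x : ℝ ↦ (x ^ 2)⁻¹) (Set.Ioi 1) :=
    (integrableOn_Ioi_rpow_of_lt (a := -2) (by norm_num) one_pos).congr_fun
      (fun x hx ↦ by simp [Real.rpow_neg (zero_lt_one.trans hx).le]) measurableSet_Ioi
  rw [openOrthant_eq_pi, IntegrableOn, volume_pi, Measure.restrict_pi_pi]
  exact Integrable.fintype_prod fun _ ↦ hone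

end Integration

section SlabEstimate

variable {F : ℝ → ℝ≥0∞} {C D : ℝ≥0∞}

/-- The exponent `e` for which the integral of `F (twistedHpoly m (n + 1) t)` over the slab
`{t | t i ≤ s}` is `O(s ^ e)`. For `n = 0` the quotient is `0 / 0 = 0`, and `e = 1` is
the right value. -/
noncomputable def slabExponent (m n : ℕ) : ℝ := 1 - (m + 1) * (n / twistedDegree (m + 1) n)

lemma slabExponent_zero_right (m : ℕ) : slabExponent m 0 = 1 := by simp [slabExponent]

lemma slabExponent_succ_right (m n : ℕ) :
    slabExponent m (n + 1) = (n + 2) / (2 * m + n + 4) := by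
  have hdegree : (twistedDegree (m + 1) (n + 1) : ℝ) = (n + 1) * (2 * m + n + 4) / 2 := by
    rw [twistedDegree]
    push_cast [Nat.cast_choose_two]
    ring
  rw [slabExponent, hdegree]
  push_cast
  field_simp
  ring

lemma slabExponent_pos (m n : ℕ) : 0 < slabExponent m n := by
  cases n with
  | zero => simp [slabExponent_zero_right]
  | succ n => rw [slabExponent_succ_right]; positivity

lemma one_div_le_slabExponent_zero_left (n : ℕ) :
    1 / (n + 1 : ℝ) ≤ slabExponent 0 n := by
  cases n with
  | zero => simp [slabExponent_zero_right]
  | succ n =>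
    rw [slabExponent_succ_right, div_le_div_iff₀ (by positivity) (by positivity)]
    push_cast
    nlinarith [(Nat.cast_nonneg n : (0 : ℝ) ≤ n)]

lemma setLIntegral_comp_mul_twistedHpoly_le (hbdd : ∀ u, 0 < u → F u ≤ C) (m n : ℕ) {x : ℝ}
    (hx : 0 < x) :
    ∫⁻ y in openOrthant 0, F (x ^ (m + 1) * twistedHpoly (m + 1) n y) ≤
      (C + ∫⁻ y in openOrthant 0, F (twistedHpoly (m + 1) n y)) *
        ENNReal.ofReal (x ^ (slabExponent m n - 1)) := by
  cases n with
  | zero =>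
    calc ∫⁻ y in openOrthant 0, F (x ^ (m + 1) * twistedHpoly (m + 1) 0 y)
        ≤ ∫⁻ _ in (openOrthant 0 : Set (Fin 0 → ℝ)), C :=
          setLIntegral_mono' (measurableSet_openOrthant 0) fun y hy ↦
            hbdd _ (mul_pos (pow_pos hx _) (twistedHpoly_pos hy))
      _ = C := by
          rw [setLIntegral_const, openOrthant_eq_pi, volume_pi_pi, Fin.prod_univ_zero, mul_one]
      _ ≤ (C + ∫⁻ y in openOrthant 0, F (twistedHpoly (m + 1) 0 y)) *
            ENNReal.ofReal (x ^ (slabExponent m 0 - 1)) := by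
          rw [slabExponent_zero_right, sub_self, Real.rpow_zero, ENNReal.ofReal_one, mul_one]
          exact le_self_add
  | succ n =>
    have hdegree : twistedDegree (m + 1) (n + 1) ≠ 0 := by simp [twistedDegree]
    have hexponent : ((x ^ (m + 1)) ^ (-((n + 1 : ℕ) / twistedDegree (m + 1) (n + 1) : ℝ))) =
        x ^ (slabExponent m (n + 1) - 1) := by
      rw [← Real.rpow_natCast_mul hx.le, slabExponent]
      push_cast
      ring_nf
    rw [setLIntegral_comp_mul_of_homogeneous volume (fun _ ↦ preimage_smul_openOrthant_zero) hdegree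
      twistedHpoly_smul F (pow_pos hx _), Module.finrank_fin_fun, hexponent, mul_comm]
    gcongr
    exact le_add_self

lemma setLIntegral_orthantSlab_comp_twistedHpoly_le (hanti : AntitoneOn F (Set.Ioi 0))
    (hbdd : ∀ u, 0 < u → F u ≤ C) (m n : ℕ) (i : Fin (n + 1)) {s : ℝ} (hs : 0 < s) :
    ∫⁻ t in orthantSlab i s, F (twistedHpoly m (n + 1) t) ≤
      (C + ∫⁻ y in openOrthant 0, F (twistedHpoly (m + 1) n y)) *
        ENNReal.ofReal (s ^ slabExponent m n / slabExponent m n) := by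
  set K : ℝ≥0∞ := C + ∫⁻ y in openOrthant 0, F (twistedHpoly (m + 1) n y)
  calc ∫⁻ t in orthantSlab i s, F (twistedHpoly m (n + 1) t)
      ≤ ∫⁻ t in orthantSlab i s,
          F (t i ^ (m + 1) * twistedHpoly (m + 1) n fun j ↦ t (i.succAbove j)) :=
        setLIntegral_mono' (measurableSet_orthantSlab i s) fun t ht ↦
          hanti (mul_pos (pow_pos (ht.1 i) _) (twistedHpoly_pos fun j ↦ ht.1 _))
            (twistedHpoly_pos ht.1) (pow_mul_twistedHpoly_le i ht.1)
    _ ≤ ∫⁻ x in Set.Ioc 0 s, ∫⁻ y in openOrthant 0, F (x ^ (m + 1) * twistedHpoly (m + 1) n y) :=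
        setLIntegral_orthantSlab_le_lintegral_lintegral i s fun x y ↦
          F (x ^ (m + 1) * twistedHpoly (m + 1) n y)
    _ ≤ ∫⁻ x in Set.Ioc 0 s, K * ENNReal.ofReal (x ^ (slabExponent m n - 1)) :=
        setLIntegral_mono' measurableSet_Ioc fun x hx ↦
          setLIntegral_comp_mul_twistedHpoly_le hbdd m n hx.1
    _ = K * ENNReal.ofReal (s ^ slabExponent m n / slabExponent m n) := by
        rw [lintegral_const_mul _ (by fun_prop),
          setLIntegral_Ioc_rpow (by linarith [slabExponent_pos m n]) hs, sub_add_cancel]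

lemma setLIntegral_sdiff_comp_twistedHpoly_le (hanti : AntitoneOn F (Set.Ioi 0))
    (hbdd : ∀ u, 0 < u → F u ≤ C) (m n : ℕ) {s : ℝ} (hs : 0 < s) :
    ∫⁻ t in openOrthant 0 \ openOrthant s, F (twistedHpoly m (n + 1) t) ≤
      (n + 1) * ((C + ∫⁻ y in openOrthant 0, F (twistedHpoly (m + 1) n y)) *
        ENNReal.ofReal (s ^ slabExponent m n / slabExponent m n)) := by
  calc ∫⁻ t in openOrthant 0 \ openOrthant s, F (twistedHpoly m (n + 1) t)
      ≤ ∫⁻ t in ⋃ i, orthantSlab i s, F (twistedHpoly m (n + 1) t) :=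
        lintegral_mono_set (openOrthant_zero_sdiff_subset_iUnion s)
    _ ≤ ∑' i, ∫⁻ t in orthantSlab i s, F (twistedHpoly m (n + 1) t) := lintegral_iUnion_le _ _
    _ ≤ ∑ _ : Fin (n + 1), (C + ∫⁻ y in openOrthant 0, F (twistedHpoly (m + 1) n y)) *
          ENNReal.ofReal (s ^ slabExponent m n / slabExponent m n) := by
        rw [tsum_fintype]
        exact Finset.sum_le_sum fun i _ ↦
          setLIntegral_orthantSlab_comp_twistedHpoly_le hanti hbdd m n i hs
    _ = (n + 1) * ((C + ∫⁻ y in openOrthant 0, F (twistedHpoly (m + 1) n y)) *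
          ENNReal.ofReal (s ^ slabExponent m n / slabExponent m n)) := by simp

lemma setLIntegral_openOrthant_one_comp_twistedHpoly_lt_top
    (hD : D ≠ ⊤) (hdecay : ∀ u, 0 < u → F u ≤ D * ENNReal.ofReal (u ^ 2)⁻¹) (m n : ℕ) :
    ∫⁻ t in openOrthant 1, F (twistedHpoly m n t) < ⊤ := by
  calc ∫⁻ t in openOrthant 1, F (twistedHpoly m n t)
      ≤ ∫⁻ t in openOrthant 1, D * ENNReal.ofReal (∏ j, (t j ^ 2)⁻¹) := by
        refine setLIntegral_mono' (measurableSet_openOrthant 1) fun t ht ↦ ?_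
        have ht₀ : t ∈ openOrthant 0 := openOrthant_anti zero_le_one ht
        have hprod : 0 < ∏ j, t j := Finset.prod_pos fun j _ ↦ ht₀ j
        refine (hdecay _ (twistedHpoly_pos ht₀)).trans ?_
        rw [Finset.prod_inv_distrib, Finset.prod_pow]
        gcongr
        exact prod_le_twistedHpoly ht
    _ = D * ∫⁻ t in openOrthant 1, ENNReal.ofReal (∏ j : Fin n, (t j ^ 2)⁻¹) :=
        lintegral_const_mul _ (by fun_prop)
    _ < ⊤ := ENNReal.mul_lt_top hD.lt_top (integrableOn_prod_inv_sq n).lintegral_lt_top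

theorem setLIntegral_comp_twistedHpoly_lt_top (hanti : AntitoneOn F (Set.Ioi 0)) (hC : C ≠ ⊤)
    (hbdd : ∀ u, 0 < u → F u ≤ C) (hD : D ≠ ⊤)
    (hdecay : ∀ u, 0 < u → F u ≤ D * ENNReal.ofReal (u ^ 2)⁻¹) (m n : ℕ) :
    ∫⁻ t in openOrthant 0, F (twistedHpoly m n t) < ⊤ := by
  induction n generalizing m with
  | zero =>
    have hempty : (openOrthant 0 : Set (Fin 0 → ℝ)) = openOrthant 1 := by simp [openOrthant]
    rw [hempty]
    exact setLIntegral_openOrthant_one_comp_twistedHpoly_lt_top hD hdecay m 0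
  | succ n ih =>
    rw [← Set.sdiff_union_of_subset (openOrthant_anti zero_le_one : openOrthant 1 ⊆ openOrthant 0)]
    refine (lintegral_union_le _ _ _).trans_lt (ENNReal.add_lt_top.2 ⟨?_, ?_⟩)
    · refine (setLIntegral_sdiff_comp_twistedHpoly_le hanti hbdd m n one_pos).trans_lt ?_
      exact ENNReal.mul_lt_top (by finiteness) (ENNReal.mul_lt_top
        (ENNReal.add_lt_top.2 ⟨hC.lt_top, ih (m + 1)⟩) ENNReal.ofReal_lt_top)
    · exact setLIntegral_openOrthant_one_comp_twistedHpoly_lt_top hD hdecay m (n + 1)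

end SlabEstimate

section WeylSum

variable {r : ℕ}

lemma antitoneOn_ofReal_Ffun_div {c : ℝ} (hc : 0 < c) :
    AntitoneOn (fun u ↦ ENNReal.ofReal (Ffun (u / c))) (Set.Ioi 0) :=
  fun _ hu _ hv huv ↦ ENNReal.ofReal_le_ofReal <|
    antitoneOn_Ffun (div_pos hu hc) (div_pos hv hc) (div_le_div_of_nonneg_right huv hc.le)

lemma ofReal_Ffun_div_le_one {c : ℝ} (hc : 0 < c) (u : ℝ) (hu : 0 < u) :
    ENNReal.ofReal (Ffun (u / c)) ≤ 1 :=
  ENNReal.ofReal_le_one.2 (Ffun_le_one (div_pos hu hc))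

lemma ofReal_Ffun_div_le_mul_inv_sq {c : ℝ} (hc : 0 < c) (u : ℝ) (hu : 0 < u) :
    ENNReal.ofReal (Ffun (u / c)) ≤ ENNReal.ofReal (6 * c ^ 2) * ENNReal.ofReal (u ^ 2)⁻¹ := by
  rw [← ENNReal.ofReal_mul (by positivity)]
  refine ENNReal.ofReal_le_ofReal ((Ffun_le_six_div_sq (div_pos hu hc)).trans_eq ?_)
  field_simp

lemma setLIntegral_ofReal_Ffun_div_lt_top {c : ℝ} (hc : 0 < c) (m n : ℕ) :
    ∫⁻ t in openOrthant 0, ENNReal.ofReal (Ffun (twistedHpoly m n t / c)) < ⊤ :=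
  setLIntegral_comp_twistedHpoly_lt_top (antitoneOn_ofReal_Ffun_div hc) ENNReal.one_ne_top
    (ofReal_Ffun_div_le_one hc) ENNReal.ofReal_ne_top (ofReal_Ffun_div_le_mul_inv_sq hc) m n

lemma integrableOn_Ffun_apoly (r : ℕ) :
    IntegrableOn (fun t ↦ Ffun (apoly r t)) (openOrthant 0) := by
  have hmeas : Measurable fun t ↦ Ffun (apoly r t) :=
    measurable_Ffun.comp (continuous_apoly r).measurable
  refine (lintegral_ofReal_ne_top_iff_integrable hmeas.aestronglyMeasurable
    (ae_of_all _ fun t ↦ Ffun_nonneg _)).1 ?_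
  have hfin := setLIntegral_ofReal_Ffun_div_lt_top (crconst_pos r) 0 r
  simp only [twistedHpoly_zero_left] at hfin
  exact hfin.ne

lemma exists_setIntegral_sub_le_mul_rpow_slabExponent (n : ℕ) :
    ∃ A : ℝ, 0 ≤ A ∧ ∀ s : ℝ, 0 < s →
      (∫ t in openOrthant 0, Ffun (apoly (n + 1) t)) -
        ∫ t in openOrthant s, Ffun (apoly (n + 1) t) ≤ A * s ^ slabExponent 0 n := by
  have hc := crconst_pos (n + 1)
  set F : ℝ → ℝ≥0∞ := fun u ↦ ENNReal.ofReal (Ffun (u / crconst (n + 1)))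
  set K : ℝ≥0∞ := 1 + ∫⁻ y in openOrthant 0, F (twistedHpoly (0 + 1) n y)
  have hK : (n + 1) * K ≠ ⊤ := by
    have hfin := setLIntegral_ofReal_Ffun_div_lt_top hc (0 + 1) n
    finiteness
  have he := slabExponent_pos 0 n
  refine ⟨((n + 1) * K).toReal / slabExponent 0 n, by positivity, fun s hs ↦ ?_⟩
  have hslabs := setLIntegral_sdiff_comp_twistedHpoly_le (antitoneOn_ofReal_Ffun_div hc)
    (ofReal_Ffun_div_le_one hc) 0 n hs
  simp only [twistedHpoly_zero_left] at hslabs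
  calc (∫ t in openOrthant 0, Ffun (apoly (n + 1) t)) -
        ∫ t in openOrthant s, Ffun (apoly (n + 1) t)
      = (∫⁻ t in openOrthant 0 \ openOrthant s, F (hpoly (n + 1) t)).toReal :=
        setIntegral_sub_setIntegral_eq_toReal (integrableOn_Ffun_apoly (n + 1))
          (fun t ↦ Ffun_nonneg _) (measurableSet_openOrthant s) (openOrthant_anti hs.le)
    _ ≤ ((n + 1) * K * ENNReal.ofReal (s ^ slabExponent 0 n / slabExponent 0 n)).toReal :=
        ENNReal.toReal_mono (ENNReal.mul_ne_top hK ENNReal.ofReal_ne_top)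
          (hslabs.trans_eq (mul_assoc _ _ _).symm)
    _ = ((n + 1) * K).toReal / slabExponent 0 n * s ^ slabExponent 0 n := by
        rw [ENNReal.toReal_mul, ENNReal.toReal_ofReal (by positivity), mul_div_left_comm,
          mul_comm]

lemma exists_setIntegral_sub_le_mul_rpow (hr : 1 ≤ r) :
    ∃ A : ℝ, ∀ s : ℝ, 0 < s →
      (∫ t in openOrthant 0, Ffun (apoly r t)) - ∫ t in openOrthant s, Ffun (apoly r t) ≤
        A * s ^ (1 / r : ℝ) := by
  obtain ⟨n, rfl⟩ := Nat.exists_eq_add_of_le' hr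
  obtain ⟨A, hA, hsub⟩ := exists_setIntegral_sub_le_mul_rpow_slabExponent n
  have hnonneg (s : ℝ) : 0 ≤ ∫ t in openOrthant s, Ffun (apoly (n + 1) t) :=
    integral_nonneg fun t ↦ Ffun_nonneg _
  refine ⟨A + ∫ t in openOrthant 0, Ffun (apoly (n + 1) t), fun s hs ↦ ?_⟩
  have hpow : 0 ≤ s ^ (1 / (n + 1 : ℕ) : ℝ) := by positivity
  rcases le_total s 1 with hs₁ | hs₁
  · have hexp : s ^ slabExponent 0 n ≤ s ^ (1 / (n + 1 : ℕ) : ℝ) :=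
      Real.rpow_le_rpow_of_exponent_ge hs hs₁
        (by exact_mod_cast one_div_le_slabExponent_zero_left n)
    calc _ ≤ A * s ^ slabExponent 0 n := hsub s hs
      _ ≤ A * s ^ (1 / (n + 1 : ℕ) : ℝ) := mul_le_mul_of_nonneg_left hexp hA
      _ ≤ _ := mul_le_mul_of_nonneg_right (le_add_of_nonneg_right (hnonneg 0)) hpow
  · have hone : 1 ≤ s ^ (1 / (n + 1 : ℕ) : ℝ) := Real.one_le_rpow hs₁ (by positivity)
    calc _ ≤ ∫ t in openOrthant 0, Ffun (apoly (n + 1) t) := sub_le_self _ (hnonneg s)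
      _ ≤ (∫ t in openOrthant 0, Ffun (apoly (n + 1) t)) * s ^ (1 / (n + 1 : ℕ) : ℝ) :=
        le_mul_of_one_le_right (hnonneg 0) hone
      _ ≤ _ := mul_le_mul_of_nonneg_right (le_add_of_nonneg_left hA) hpow

end WeylSum

/-- The integral `∫_{F ≤ t_i for all i} F(a_r(t)) dt` is sandwiched by Riemann sums:
`∫_{[s,∞)^r} ≤ ∑_{k ∈ ℕ^r} F(a_r(s k)) s^r ≤ ∫_{[0,∞)^r}`, the full integral converges,
and the difference between the sum and the full integral is `O_r(s^{1/r})`. -/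
theorem stmt18 (r : ℕ) (hr : 1 ≤ r) :
    IntegrableOn (fun t : Fin r → ℝ => Ffun (apoly r t)) {t | ∀ i, 0 ≤ t i} volume ∧
    ∃ C : ℝ, ∀ s : ℝ, 0 < s →
      Summable (sumTerm r s) ∧
      (∫ t in {t : Fin r → ℝ | ∀ i, s ≤ t i}, Ffun (apoly r t)) ≤ ∑' k, sumTerm r s k ∧
      (∑' k, sumTerm r s k) ≤ ∫ t in {t : Fin r → ℝ | ∀ i, 0 ≤ t i}, Ffun (apoly r t) ∧
      |(∑' k, sumTerm r s k) - ∫ t in {t : Fin r → ℝ | ∀ i, 0 ≤ t i}, Ffun (apoly r t)|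
        ≤ C * s ^ ((1 : ℝ) / r) := by
  have hclosed (c : ℝ) := setOf_forall_le_ae_eq_openOrthant (ι := Fin r) c
  have hfi := integrableOn_Ffun_apoly r
  have hanti := antitoneOn_Ffun_apoly (r := r)
  have hnonneg : ∀ t ∈ openOrthant 0, 0 ≤ Ffun (apoly r t) := fun t _ ↦ Ffun_nonneg _
  have hterm (s : ℝ) : sumTerm r s =
      fun k ↦ Ffun (apoly r fun i ↦ s * (k.1 i : ℝ)) * s ^ Fintype.card (Fin r) := by
    simp only [Fintype.card_fin]
    rfl
  obtain ⟨A, hA⟩ := exists_setIntegral_sub_le_mul_rpow hr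
  refine ⟨hfi.congr_set_ae (hclosed 0), A, fun s hs ↦ ?_⟩
  have hsum := summable_latticeTerm hanti hnonneg hfi hs
  have hlower := setIntegral_le_tsum_latticeTerm hanti hnonneg hfi hs
  have hupper := tsum_latticeTerm_le_setIntegral hanti hnonneg hfi hs
  rw [hterm, setIntegral_congr_set (hclosed 0), setIntegral_congr_set (hclosed s)]
  refine ⟨hsum, hlower, hupper, ?_⟩
  rw [abs_sub_comm, abs_of_nonneg (sub_nonneg.2 hupper)]
  exact (sub_le_sub_left hlower _).trans (hA s hs)
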